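/- Let L and L′ be coframes equipped with convergence structures lim_L and lim_{L′}, and let φ : L → L′ be a continuous coframe morphism with left adjoint φ_!. Then for every ℓ′ ∈ L′: φ_!(adh_{L′}(ℓ′)) ≤ adh_L(φ_!(ℓ′)), and adh_{L′}(ℓ′) ≤ φ(adh_L(φ_!(ℓ′))). -/

import Mathlib

/-!
Pushing raw adherences through `φ` only requires that grills be compatible with preimages: if
`φ a ∈ F^#` then `a ∈ (φ⁻¹ F)^#`, because `φ` preserves binary meets and `⊥`. With continuity this
gives `adh⁰ (φ a) ≤ φ (adh⁰ a)` (`adh0_map_le`). Since `φ` preserves complemented elements, and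
`φ_! ℓ' ≤ a` means `ℓ' ≤ φ a`, each `a` occurring in the infimum for `adh (φ_! ℓ')` gives a `φ a`
occurring in the one for `adh ℓ'`. As `φ` preserves infima, the second inequality follows, and
the first is its transpose under the adjunction.
-/

/-- The grill of a subset `A` of a lattice with bottom:
`A^# = {ℓ | ∀ a ∈ A, a ⊓ ℓ ≠ ⊥}`. -/
def grill {L : Type*} [Lattice L] [OrderBot L] (A : Set L) : Set L :=
  {l | ∀ a ∈ A, a ⊓ l ≠ ⊥}

/-- A filter on a lattice: a nonempty, upward-closed subset closed under binary meets. -/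
def IsLatFilter {L : Type*} [Lattice L] (F : Set L) : Prop :=
  F.Nonempty ∧ (∀ x ∈ F, ∀ y : L, x ≤ y → y ∈ F) ∧ ∀ x ∈ F, ∀ y ∈ F, x ⊓ y ∈ F

/-- A convergence structure on a lattice: a map on subsets, monotone on filters. -/
def ConvMono {L : Type*} [Lattice L] (lim : Set L → L) : Prop :=
  ∀ F G : Set L, IsLatFilter F → IsLatFilter G → F ⊆ G → lim F ≤ lim G

/-- An element `a` of a bounded lattice is complemented if it has a complement. -/
def Cmpl {L : Type*} [Lattice L] [BoundedOrder L] (a : L) : Prop :=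
  ∃ b : L, a ⊔ b = ⊤ ∧ a ⊓ b = ⊥

/-- A coframe morphism: preserves arbitrary infima and finite suprema. -/
def IsCoframeHom {L L' : Type*} [Order.Coframe L] [Order.Coframe L'] (φ : L → L') : Prop :=
  (∀ S : Set L, φ (sInf S) = sInf (φ '' S)) ∧ (φ ⊥ = ⊥) ∧
    ∀ x y : L, φ (x ⊔ y) = φ x ⊔ φ y

/-- Continuity of `φ : L → L′`: for every filter `F` on `L′`,
`limL' F ≤ φ (limL (φ⁻¹ F))`. -/
def Contin {L L' : Type*} [Lattice L] [Lattice L']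
    (limL : Set L → L) (limL' : Set L' → L') (φ : L → L') : Prop :=
  ∀ F : Set L', IsLatFilter F → limL' F ≤ φ (limL (φ ⁻¹' F))

/-- The raw adherence of a convergence structure:
`adh⁰ ℓ = ⋁ {lim F | F a filter with ℓ ∈ F^#}`. -/
def adh0 {L : Type*} [Order.Coframe L] (lim : Set L → L) (l : L) : L :=
  sSup {x | ∃ F : Set L, IsLatFilter F ∧ l ∈ grill F ∧ x = lim F}

/-- The adherence of a convergence structure:
`adh ℓ = ⋀ {adh⁰ a | a complemented, a ≥ ℓ}`. -/
def adh {L : Type*} [Order.Coframe L] (lim : Set L → L) (l : L) : L :=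
  sInf {x | ∃ a : L, Cmpl a ∧ l ≤ a ∧ x = adh0 lim a}

section CoframeHom

variable {L L' : Type*} [Order.Coframe L] [Order.Coframe L'] {φ : L → L'}

theorem IsCoframeHom.map_inf (hφ : IsCoframeHom φ) (x y : L) : φ (x ⊓ y) = φ x ⊓ φ y := by
  have h := hφ.1 {x, y}
  rwa [Set.image_pair, sInf_pair, sInf_pair] at h

theorem IsCoframeHom.map_top (hφ : IsCoframeHom φ) : φ ⊤ = ⊤ := by
  have h := hφ.1 ∅
  rwa [Set.image_empty, sInf_empty, sInf_empty] at h

theorem IsCoframeHom.mono (hφ : IsCoframeHom φ) {x y : L} (h : x ≤ y) : φ x ≤ φ y := by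
  rw [← inf_eq_left, ← hφ.map_inf, inf_eq_left.2 h]

theorem Cmpl.map (hφ : IsCoframeHom φ) {a : L} (ha : Cmpl a) : Cmpl (φ a) := by
  obtain ⟨b, h1, h2⟩ := ha
  exact ⟨φ b, by rw [← hφ.2.2, h1, hφ.map_top], by rw [← hφ.map_inf, h2, hφ.2.1]⟩

theorem IsLatFilter.preimage (hφ : IsCoframeHom φ) {F : Set L'} (hF : IsLatFilter F) :
    IsLatFilter (φ ⁻¹' F) := by
  obtain ⟨⟨z, hz⟩, hup, hinf⟩ := hF
  refine ⟨⟨⊤, ?_⟩, fun x hx y hxy => hup _ hx _ (hφ.mono hxy), fun x hx y hy => ?_⟩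
  · exact hup z hz _ (by rw [hφ.map_top]; exact le_top)
  · rw [Set.mem_preimage, hφ.map_inf]
    exact hinf _ hx _ hy

theorem mem_grill_preimage (hφ : IsCoframeHom φ) {F : Set L'} {a : L} (ha : φ a ∈ grill F) :
    a ∈ grill (φ ⁻¹' F) := fun b hb h =>
  ha (φ b) hb (by rw [← hφ.map_inf, h, hφ.2.1])

theorem adh0_map_le (hφ : IsCoframeHom φ) {limL : Set L → L} {limL' : Set L' → L'}
    (hcont : Contin limL limL' φ) (a : L) : adh0 limL' (φ a) ≤ φ (adh0 limL a) := by
  refine sSup_le ?_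
  rintro _ ⟨F, hF, ha, rfl⟩
  exact (hcont F hF).trans
    (hφ.mono (le_sSup ⟨φ ⁻¹' F, hF.preimage hφ, mem_grill_preimage hφ ha, rfl⟩))

end CoframeHom

/-- Images of adherences under a continuous coframe morphism. -/
theorem stmt12 {L L' : Type*} [Order.Coframe L] [Order.Coframe L']
    (limL : Set L → L) (limL' : Set L' → L')
    (hL : ConvMono limL) (hL' : ConvMono limL')
    (φ : L → L') (hφ : IsCoframeHom φ)
    (φexc : L' → L) (hadj : ∀ (l' : L') (l : L), φexc l' ≤ l ↔ l' ≤ φ l)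
    (hcont : Contin limL limL' φ) :
    ∀ l' : L',
      φexc (adh limL' l') ≤ adh limL (φexc l') ∧
      adh limL' l' ≤ φ (adh limL (φexc l')) := by
  intro l'
  have key : adh limL' l' ≤ φ (adh limL (φexc l')) := by
    rw [adh, adh, hφ.1]
    refine le_sInf ?_
    rintro _ ⟨_, ⟨a, ha, hle, rfl⟩, rfl⟩
    refine le_trans (sInf_le ?_) (adh0_map_le hφ hcont a)
    exact ⟨φ a, ha.map hφ, (hadj _ _).1 hle, rfl⟩
  exact ⟨(hadj _ _).2 key, key⟩
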